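/- Lie transform estimate: Let j₀, N ∈ ℕ, r > 2 and 0 < σ < r/2. Let W be a formal Hamiltonian with W(n) = 0 whenever supp n ⊄ A(j₀,N), and let U be a formal Hamiltonian with ‖U‖_{j₀,N,r} < ∞. If (e/σ)·‖W‖_{j₀,N,r} ≤ 1/2, then the Lie transform T_W U is well defined (all defining series converge absolutely coefficientwise) and ‖T_W U‖_{j₀,N,r−σ} ≤ 2·‖U‖_{j₀,N,r}. -/

import Mathlib

/-!
The proof rests on one bracket estimate. If `W` is supported in the barrier, then
`‖{F, W}‖_ρ ≤ δ⁻¹ ‖F‖_{ρ + δ} ‖W‖_{ρ + δ}` for `ρ ≥ 1` and `δ > 0` (`hnorm_bracket_le`).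
Indeed, if `l` arises from `n` and `m` by a contraction at `k`, then `|l|₁ = |n|₁ + |m|₁ - 2` and
`Δ(l) ≤ Δ(n) + Δ(m)`, because both supports contain `k`. With `a` and `b` the weight exponents
`Δ + |·|₁ - 1` of `n` and `m`, the weight of `l` is therefore at most `(a + b) ρ ^ (a + b - 1)`,
which Bernoulli's inequality bounds by `δ⁻¹ (ρ + δ) ^ (a + b)` (`Contracts.weight_le`). The
combinatorial factors sum over `k` to at most `|n|₁ |m|₁`, so the sum over `(n, m)` factorizes.
The barrier condition passes from `m` to `n` since `k` lies in both supports.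

Splitting the loss `σ` evenly over `i` brackets and using `i ^ i ≤ i! e ^ i` gives
`‖U^(i)‖_{r - σ} ≤ i! 2⁻ⁱ ‖U‖_r` (`hnorm_adIter_le`), and the geometric series yields the factor `2`.
Monomials away from the barrier are invisible to the norm; their coefficients are controlled for
`i ≥ 1` by the unweighted bound `tsum_enorm_bracketTerm_le`.
-/

open Classical MeasureTheory
open scoped BigOperators ENNReal NNReal

noncomputable section

namespace QPNLS

abbrev Lat (d : ℕ) := Fin d → ℤ

def jnorm {d : ℕ} (j : Lat d) : ℝ := Real.sqrt (∑ i, ((j i : ℝ))^2)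

abbrev Mono (d : ℕ) := (Lat d →₀ ℕ) × (Lat d →₀ ℕ)

abbrev FormalHam (d : ℕ) := Mono d → ℂ

def msupp {d : ℕ} (n : Mono d) : Finset (Lat d) := n.1.support ∪ n.2.support

def diam {d : ℕ} (n : Mono d) : ℝ :=
  (((msupp n ×ˢ msupp n).sup fun p => (jnorm (p.1 - p.2)).toNNReal) : ℝ≥0)

def deg {d : ℕ} (n : Mono d) : ℕ := (∑ j ∈ n.1.support, n.1 j) + (∑ j ∈ n.2.support, n.2 j)

def inBarrier {d : ℕ} (j₀ N : ℝ) (n : Mono d) : Prop :=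
  ∃ j ∈ msupp n, |jnorm j - j₀| ≤ N

def suppInBarrier {d : ℕ} (j₀ N : ℝ) (n : Mono d) : Prop :=
  ∀ j ∈ msupp n, |jnorm j - j₀| ≤ N

def hnorm {d : ℕ} (j₀ N r : ℝ) (W : FormalHam d) : ℝ≥0∞ :=
  ∑' n : Mono d, if inBarrier j₀ N n then
    (‖W n‖₊ : ℝ≥0∞) * (deg n : ℝ≥0∞) * ENNReal.ofReal (r ^ (diam n + (deg n : ℝ) - 1)) else 0

def bracketTerm {d : ℕ} (W U : FormalHam d) (l : Mono d) (p : Lat d × Mono d × Mono d) : ℂ :=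
  if (∀ j : Lat d, (p.2.1.1 j : ℤ) + (p.2.2.1 j : ℤ) - (if j = p.1 then 1 else 0) = (l.1 j : ℤ))
     ∧ (∀ j : Lat d, (p.2.1.2 j : ℤ) + (p.2.2.2 j : ℤ) - (if j = p.1 then 1 else 0) = (l.2 j : ℤ))
  then W p.2.1 * U p.2.2 *
    (((p.2.1.1 p.1 * p.2.2.2 p.1 : ℤ) - (p.2.1.2 p.1 * p.2.2.1 p.1 : ℤ) : ℤ) : ℂ)
  else 0

def bracket {d : ℕ} (W U : FormalHam d) : FormalHam d :=
  fun l => Complex.I * ∑' p : Lat d × Mono d × Mono d, bracketTerm W U l p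

def BracketAbsConv {d : ℕ} (W U : FormalHam d) : Prop :=
  ∀ l : Mono d, Summable (fun p : Lat d × Mono d × Mono d => ‖bracketTerm W U l p‖)

def adIter {d : ℕ} (W U : FormalHam d) : ℕ → FormalHam d
  | 0 => U
  | (i+1) => bracket (adIter W U i) W

def lieTransform {d : ℕ} (W U : FormalHam d) : FormalHam d :=
  fun l => ∑' i : ℕ, ((Nat.factorial i : ℂ))⁻¹ * adIter W U i l

def LieAbsConv {d : ℕ} (W U : FormalHam d) : Prop :=
  (∀ i : ℕ, BracketAbsConv (adIter W U i) W) ∧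
  ∀ l : Mono d, Summable (fun i : ℕ => ((Nat.factorial i : ℝ))⁻¹ * ‖adIter W U i l‖)

def IsResonant {d : ℕ} (n : Mono d) : Prop := n.1 = n.2

def freqSum {d : ℕ} (V : Lat d → ℝ) (n : Mono d) : ℝ :=
  ∑ j ∈ msupp n, ((n.1 j : ℝ) - (n.2 j : ℝ)) * V j

def slicedNorm {d : ℕ} (j₀ N r : ℝ) (A : ℕ) (Z R : FormalHam d) : ℝ≥0∞ :=
  ∑' n : Mono d, if diam n + (deg n : ℝ) = (A : ℝ) ∧ inBarrier j₀ N n then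
    ((‖Z n‖₊ + ‖R n‖₊ : ℝ≥0) : ℝ≥0∞) * (deg n : ℝ≥0∞) *
      ENNReal.ofReal (r ^ (diam n + (deg n : ℝ) - 1)) else 0

def pot {d : ℕ} (Γ : Finset (Lat d)) (v : Lat d → ℝ) (θ α : Fin d → ℝ) (j : Lat d) : ℝ :=
  ∑ ℓ ∈ Γ, v ℓ * Real.cos (2 * Real.pi * ∑ i, (ℓ i : ℝ) * (θ i + (j i : ℝ) * α i))

def diamZ {d : ℕ} (k : Lat d →₀ ℤ) : ℝ :=
  (((k.support ×ˢ k.support).sup fun p => (jnorm (p.1 - p.2)).toNNReal) : ℝ≥0)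

def norm1Z {d : ℕ} (k : Lat d →₀ ℤ) : ℕ := ∑ j ∈ k.support, (k j).natAbs

def Nonresonant {d : ℕ} (ω : Lat d → ℝ) (γ : ℝ) (L M j₀ : ℕ) : Prop :=
  ∀ k : Lat d →₀ ℤ, k ≠ 0 →
    (∃ j ∈ k.support, |jnorm j - (j₀ : ℝ)| ≤ (M : ℝ)^2) →
    diamZ k + (norm1Z k : ℝ) ≤ (M : ℝ) + 2 →
    (γ / (2 * (L : ℝ) * (M : ℝ)^2 * (j₀ : ℝ)) ^ (2 * (d + 1))) ^ (10 * L^4 * M^4) ≤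
      |∑ j ∈ k.support, (k j : ℝ) * ω j|

def Dham {d : ℕ} (V : Lat d → ℝ) : FormalHam d :=
  fun n => if h : ∃ j : Lat d, n = (Finsupp.single j 1, Finsupp.single j 1)
    then ((V h.choose / 2 : ℝ) : ℂ) else 0

def Z1ham {d : ℕ} (ε₂ : ℝ) : FormalHam d :=
  fun n => if ∃ j : Lat d, n = (Finsupp.single j 2, Finsupp.single j 2)
    then ((ε₂ / 4 : ℝ) : ℂ) else 0

def R1ham {d : ℕ} (ε₁ : ℝ) : FormalHam d :=
  fun n => if ∃ i j : Lat d, (∑ a, ((i - j) a).natAbs) = 1 ∧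
      n = (Finsupp.single i 1, Finsupp.single j 1)
    then ((ε₁ / 2 : ℝ) : ℂ) else 0

def H1 {d : ℕ} (V : Lat d → ℝ) (ε₁ ε₂ : ℝ) : FormalHam d :=
  fun n => Dham V n + Z1ham ε₂ n + R1ham ε₁ n

def Hseq {d : ℕ} (H : FormalHam d) (F : ℕ → FormalHam d) : ℕ → FormalHam d
  | 0 => H
  | (i+1) => lieTransform (F i) (Hseq H F i)

end QPNLS

namespace QPNLS

/-! ### The lattice norm, the degree and the diameter -/

lemma jnorm_eq_norm {d : ℕ} (j : Lat d) :
    jnorm j = ‖(WithLp.toLp 2 (fun i => (j i : ℝ)) : EuclideanSpace ℝ (Fin d))‖ := by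
  rw [EuclideanSpace.norm_eq]; simp [jnorm]

lemma jnorm_sub_le {d : ℕ} (a b c : Lat d) : jnorm (a - c) ≤ jnorm (a - b) + jnorm (b - c) := by
  simp only [jnorm_eq_norm]
  refine le_trans (le_of_eq ?_) (norm_add_le _ _)
  congr 1
  ext i
  simp

lemma jnorm_le_diam {d : ℕ} {n : Mono d} {a b : Lat d} (ha : a ∈ msupp n) (hb : b ∈ msupp n) :
    jnorm (a - b) ≤ diam n := by
  have h := Finset.le_sup (f := fun p : Lat d × Lat d => (jnorm (p.1 - p.2)).toNNReal)
    (Finset.mk_mem_product ha hb)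
  exact (Real.le_coe_toNNReal _).trans (NNReal.coe_le_coe.2 h)

lemma diam_nonneg {d : ℕ} (n : Mono d) : 0 ≤ diam n := NNReal.coe_nonneg _

lemma diam_le {d : ℕ} {n : Mono d} {D : ℝ} (hD : 0 ≤ D)
    (h : ∀ a ∈ msupp n, ∀ b ∈ msupp n, jnorm (a - b) ≤ D) : diam n ≤ D := by
  lift D to ℝ≥0 using hD
  refine NNReal.coe_le_coe.2 (Finset.sup_le fun p hp => ?_)
  rw [Finset.mem_product] at hp
  exact Real.toNNReal_le_iff_le_coe.2 (h _ hp.1 _ hp.2)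

lemma deg_eq {d : ℕ} (n : Mono d) : deg n = n.1.degree + n.2.degree := rfl

lemma mem_msupp {d : ℕ} {n : Mono d} {j : Lat d} : j ∈ msupp n ↔ n.1 j ≠ 0 ∨ n.2 j ≠ 0 := by
  simp [msupp]

lemma one_le_deg {d : ℕ} {n : Mono d} {k : Lat d} (hk : k ∈ msupp n) : 1 ≤ deg n := by
  have h1 := Finsupp.le_degree k n.1
  have h2 := Finsupp.le_degree k n.2
  rw [mem_msupp] at hk
  rw [deg_eq]
  omega

lemma inBarrier.one_le_deg {d : ℕ} {j₀ N : ℝ} {n : Mono d} (h : inBarrier j₀ N n) : 1 ≤ deg n := by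
  obtain ⟨j, hj, -⟩ := h
  exact QPNLS.one_le_deg hj

/-- The exponent `Δ(n) + |n|₁ - 1` of the radius in the weight of the monomial `n`. -/
def wexp {d : ℕ} (n : Mono d) : ℝ := diam n + (deg n : ℝ) - 1

lemma deg_le_wexp {d : ℕ} (n : Mono d) : (deg n : ℝ) - 1 ≤ wexp n := by
  have := diam_nonneg n
  unfold wexp; linarith

lemma wexp_nonneg {d : ℕ} {n : Mono d} (h : 1 ≤ deg n) : 0 ≤ wexp n := by
  have h1 := deg_le_wexp n
  have : (1 : ℝ) ≤ deg n := by exact_mod_cast h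
  linarith

/-! ### One contraction -/

/-- The monomial `l` arises from `n` and `m` by contracting a conjugate pair of factors at `k`;
this is the index condition of the Poisson bracket, stated without subtraction. -/
def Contracts {d : ℕ} (k : Lat d) (n m l : Mono d) : Prop :=
  n.1 + m.1 = l.1 + Finsupp.single k 1 ∧ n.2 + m.2 = l.2 + Finsupp.single k 1

/-- A bound for the absolute value of the combinatorial factor in the Poisson bracket. -/
def coef {d : ℕ} (k : Lat d) (n m : Mono d) : ℕ := n.1 k * m.2 k + n.2 k * m.1 k

lemma bracketTerm_eq {d : ℕ} (F W : FormalHam d) (k : Lat d) (n m l : Mono d) :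
    bracketTerm F W l (k, n, m) = if Contracts k n m l then F n * W m *
      (((n.1 k * m.2 k : ℤ) - (n.2 k * m.1 k : ℤ) : ℤ) : ℂ) else 0 := by
  have key : ∀ f g h : Lat d →₀ ℕ, (∀ j, (f j : ℤ) + (g j : ℤ) - (if j = k then 1 else 0) = (h j : ℤ))
      ↔ f + g = h + Finsupp.single k 1 := by
    intro f g h
    rw [Finsupp.ext_iff]
    refine forall_congr' fun j => ?_
    simp only [Finsupp.add_apply, Finsupp.single_apply]
    by_cases hj : j = k
    · subst hj; simp; omega
    · simp [hj, Ne.symm hj]; omega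
  unfold bracketTerm Contracts
  simp only [key]
  congr

lemma enorm_bracketTerm_le {d : ℕ} (F W : FormalHam d) (k : Lat d) (n m l : Mono d) :
    ‖bracketTerm F W l (k, n, m)‖ₑ ≤ ‖F n‖ₑ * ‖W m‖ₑ * (coef k n m : ℝ≥0∞) := by
  rw [bracketTerm_eq]
  split_ifs
  · rw [enorm_mul, enorm_mul]
    gcongr
    rw [← ofReal_norm, Complex.norm_intCast, ← ENNReal.ofReal_natCast]
    refine ENNReal.ofReal_le_ofReal ?_
    have hx : (0 : ℝ) ≤ (n.1 k : ℝ) * m.2 k := by positivity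
    have hy : (0 : ℝ) ≤ (n.2 k : ℝ) * m.1 k := by positivity
    unfold coef
    push_cast
    rw [abs_le]; constructor <;> linarith
  · simp

lemma bracketTerm_ne_zero {d : ℕ} {j₀ N : ℝ} {F W : FormalHam d}
    (hW : ∀ n : Mono d, ¬ suppInBarrier j₀ N n → W n = 0) {k : Lat d} {n m l : Mono d}
    (h : bracketTerm F W l (k, n, m) ≠ 0) :
    Contracts k n m l ∧ k ∈ msupp n ∧ k ∈ msupp m ∧ inBarrier j₀ N n ∧ inBarrier j₀ N m := by
  rw [bracketTerm_eq] at h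
  split_ifs at h with hc
  · have hWm : W m ≠ 0 := fun h0 => h (by simp [h0])
    have hm : suppInBarrier j₀ N m := by
      by_contra h0; exact hWm (hW m h0)
    have hk : k ∈ msupp n ∧ k ∈ msupp m := by
      simp only [mem_msupp]
      by_contra h0
      apply h
      have h1 : (n.1 k * m.2 k : ℤ) - (n.2 k * m.1 k : ℤ) = 0 := by
        by_cases h2 : n.1 k ≠ 0 ∨ n.2 k ≠ 0
        · have h3 : m.1 k = 0 ∧ m.2 k = 0 := by tauto
          simp [h3.1, h3.2]
        · have h3 : n.1 k = 0 ∧ n.2 k = 0 := by tauto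
          simp [h3.1, h3.2]
      rw [h1]; simp
    exact ⟨hc, hk.1, hk.2, ⟨k, hk.1, hm k hk.2⟩, ⟨k, hk.2, hm k hk.2⟩⟩
  · exact absurd rfl h

lemma Contracts.unique {d : ℕ} {k : Lat d} {n m l l' : Mono d} (h : Contracts k n m l)
    (h' : Contracts k n m l') : l = l' :=
  Prod.ext (add_right_cancel (h.1.symm.trans h'.1)) (add_right_cancel (h.2.symm.trans h'.2))

lemma Contracts.deg {d : ℕ} {k : Lat d} {n m l : Mono d} (h : Contracts k n m l) :
    deg l + 2 = deg n + deg m := by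
  have h1 := congrArg Finsupp.degree h.1
  have h2 := congrArg Finsupp.degree h.2
  simp only [map_add, Finsupp.degree_single] at h1 h2
  simp only [deg_eq]
  omega

lemma Contracts.msupp_subset {d : ℕ} {k : Lat d} {n m l : Mono d} (h : Contracts k n m l) :
    msupp l ⊆ msupp n ∪ msupp m := by
  intro j hj
  have h1 := DFunLike.congr_fun h.1 j
  have h2 := DFunLike.congr_fun h.2 j
  simp only [Finsupp.add_apply] at h1 h2
  rw [Finset.mem_union]
  rw [mem_msupp] at *
  rw [mem_msupp]
  omega

/-- The supports of `n` and `m` overlap at `k`, so any two sites of `l` are joined through `k`. -/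
lemma Contracts.diam_le {d : ℕ} {k : Lat d} {n m l : Mono d} (h : Contracts k n m l)
    (hn : k ∈ msupp n) (hm : k ∈ msupp m) : diam l ≤ diam n + diam m := by
  have dn := diam_nonneg n
  have dm := diam_nonneg m
  refine QPNLS.diam_le (by positivity) fun a ha b hb => ?_
  rcases Finset.mem_union.1 (h.msupp_subset ha) with ha | ha <;>
  rcases Finset.mem_union.1 (h.msupp_subset hb) with hb | hb
  · linarith [jnorm_le_diam ha hb]
  · linarith [jnorm_sub_le a k b, jnorm_le_diam ha hn, jnorm_le_diam hm hb]
  · linarith [jnorm_sub_le a k b, jnorm_le_diam ha hm, jnorm_le_diam hn hb]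
  · linarith [jnorm_le_diam ha hb]

/-- A Cauchy-type estimate, from Bernoulli's inequality for `(1 + δ / ρ) ^ s`. -/
lemma mul_rpow_sub_one_le {ρ δ s : ℝ} (hρ : 0 < ρ) (hδ : 0 < δ) (hs : 1 ≤ s) :
    s * ρ ^ (s - 1) ≤ δ⁻¹ * (ρ + δ) ^ s := by
  have h0 : 0 < δ / ρ := by positivity
  have hb := one_add_mul_self_le_rpow_one_add (s := δ / ρ) (by linarith) hs
  have h1 : (ρ + δ) ^ s = ρ ^ s * (1 + δ / ρ) ^ s := by
    rw [← Real.mul_rpow hρ.le (by positivity)]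
    congr 1; field_simp
  rw [h1, Real.rpow_sub_one hρ.ne']
  have h2 : 0 < ρ ^ s := Real.rpow_pos_of_pos hρ s
  calc s * (ρ ^ s / ρ) = δ⁻¹ * (ρ ^ s * (s * (δ / ρ))) := by field_simp
    _ ≤ δ⁻¹ * (ρ ^ s * (1 + δ / ρ) ^ s) := by gcongr; linarith

/-- A contraction gains one power of the radius, which pays for the factor `deg l` when the radius
drops from `ρ + δ` to `ρ`. -/
lemma Contracts.weight_le {d : ℕ} {k : Lat d} {n m l : Mono d} (h : Contracts k n m l)
    (hn : k ∈ msupp n) (hm : k ∈ msupp m) (hl : 1 ≤ QPNLS.deg l) {ρ δ : ℝ} (hρ : 1 ≤ ρ)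
    (hδ : 0 < δ) :
    (QPNLS.deg l : ℝ) * ρ ^ wexp l ≤ δ⁻¹ * ((ρ + δ) ^ wexp n * (ρ + δ) ^ wexp m) := by
  have hdeg : (QPNLS.deg l : ℝ) + 2 = QPNLS.deg n + QPNLS.deg m := by exact_mod_cast h.deg
  have hl' : (1 : ℝ) ≤ QPNLS.deg l := by exact_mod_cast hl
  have hdiam := h.diam_le hn hm
  have hnw := deg_le_wexp n
  have hmw := deg_le_wexp m
  have hlw : wexp l ≤ wexp n + wexp m - 1 := by unfold wexp; linarith
  rw [← Real.rpow_add (by linarith)]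
  refine le_trans ?_ (mul_rpow_sub_one_le (by linarith) hδ (by linarith))
  gcongr ?_ * ?_
  · linarith
  · linarith
  · exact Real.rpow_le_rpow_of_exponent_le hρ hlw

/-! ### The norm of a bracket -/

/-- The summand of the norm without its factor `deg n`. -/
def part {d : ℕ} (j₀ N r : ℝ) (F : FormalHam d) (n : Mono d) : ℝ≥0∞ :=
  if inBarrier j₀ N n then ‖F n‖ₑ * ENNReal.ofReal (r ^ wexp n) else 0

lemma hnorm_eq {d : ℕ} (j₀ N r : ℝ) (F : FormalHam d) :
    hnorm j₀ N r F = ∑' n, part j₀ N r F n * (deg n : ℝ≥0∞) := by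
  unfold hnorm part
  refine tsum_congr fun n => ?_
  split_ifs
  · rw [mul_right_comm]; rfl
  · simp

lemma hnorm_mono {d : ℕ} (j₀ N : ℝ) {r r' : ℝ} (hr : 0 ≤ r) (h : r ≤ r') (F : FormalHam d) :
    hnorm j₀ N r F ≤ hnorm j₀ N r' F := by
  rw [hnorm_eq, hnorm_eq]
  refine ENNReal.tsum_le_tsum fun n => ?_
  unfold part
  split_ifs with hb
  · have := wexp_nonneg hb.one_le_deg
    gcongr
  · simp

lemma tsum_coef_le {d : ℕ} (n m : Mono d) :
    ∑' k, (coef k n m : ℝ≥0∞) ≤ (deg n : ℝ≥0∞) * (deg m : ℝ≥0∞) := by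
  have hs : ∀ f : Lat d →₀ ℕ, ∑' k, (f k : ℝ≥0∞) = (f.degree : ℝ≥0∞) := by
    intro f
    rw [tsum_eq_sum (s := f.support) (by simp), Finsupp.degree_apply, Nat.cast_sum]
  calc ∑' k, (coef k n m : ℝ≥0∞)
      ≤ ∑' k, ((n.1 k : ℝ≥0∞) + (n.2 k : ℝ≥0∞)) * (deg m : ℝ≥0∞) := by
        refine ENNReal.tsum_le_tsum fun k => ?_
        have h1 := Finsupp.le_degree k m.1
        have h2 := Finsupp.le_degree k m.2
        have : coef k n m ≤ (n.1 k + n.2 k) * deg m := by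
          unfold coef
          rw [add_mul, deg_eq]
          gcongr <;> omega
        exact_mod_cast this
    _ = _ := by
        rw [ENNReal.tsum_mul_right, ENNReal.tsum_add, hs, hs, deg_eq n]
        push_cast
        rfl

lemma tsum_part_le {d : ℕ} (j₀ N r : ℝ) (F W : FormalHam d) :
    ∑' p : Lat d × Mono d × Mono d,
      part j₀ N r F p.2.1 * part j₀ N r W p.2.2 * (coef p.1 p.2.1 p.2.2 : ℝ≥0∞)
      ≤ hnorm j₀ N r F * hnorm j₀ N r W := by
  rw [ENNReal.tsum_prod', ENNReal.tsum_comm, ENNReal.tsum_prod']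
  simp only [ENNReal.tsum_mul_left]
  calc _ ≤ ∑' n, ∑' m, (part j₀ N r F n * (deg n : ℝ≥0∞)) * (part j₀ N r W m * (deg m : ℝ≥0∞)) := by
        refine ENNReal.tsum_le_tsum fun n => ENNReal.tsum_le_tsum fun m => ?_
        calc _ ≤ part j₀ N r F n * part j₀ N r W m * ((deg n : ℝ≥0∞) * (deg m : ℝ≥0∞)) := by
              gcongr; exact tsum_coef_le n m
          _ = _ := by ring
    _ = _ := by
        simp only [ENNReal.tsum_mul_left, ENNReal.tsum_mul_right]
        rw [hnorm_eq, hnorm_eq]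

section

variable {d : ℕ} {j₀ N : ℝ} {W : FormalHam d}

/-- At radius at least `1` the weights are at least `1`, so the series defining a single coefficient
of a bracket is bounded by the norms, also for monomials `l` away from the barrier. -/
lemma tsum_enorm_bracketTerm_le (hW : ∀ n : Mono d, ¬ suppInBarrier j₀ N n → W n = 0)
    {r : ℝ} (hr : 1 ≤ r) (F : FormalHam d) (l : Mono d) :
    ∑' p, ‖bracketTerm F W l p‖ₑ ≤ hnorm j₀ N r F * hnorm j₀ N r W := by
  refine le_trans (ENNReal.tsum_le_tsum ?_) (tsum_part_le j₀ N r F W)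
  rintro ⟨k, n, m⟩
  by_cases h0 : bracketTerm F W l (k, n, m) = 0
  · simp [h0]
  obtain ⟨-, -, -, hn, hm⟩ := bracketTerm_ne_zero hW h0
  refine (enorm_bracketTerm_le F W k n m l).trans ?_
  have one_le : ∀ n : Mono d, 1 ≤ deg n → 1 ≤ ENNReal.ofReal (r ^ wexp n) := fun n hn => by
    rw [ENNReal.one_le_ofReal]
    exact Real.one_le_rpow hr (wexp_nonneg hn)
  simp only [part, hn, hm, if_true]
  gcongr
  · exact le_mul_of_one_le_right' (one_le n hn.one_le_deg)
  · exact le_mul_of_one_le_right' (one_le m hm.one_le_deg)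

lemma enorm_bracket_le (F W : FormalHam d) (l : Mono d) :
    ‖bracket F W l‖ₑ ≤ ∑' p, ‖bracketTerm F W l p‖ₑ := by
  unfold bracket
  rw [enorm_mul, ← ofReal_norm Complex.I, Complex.norm_I]
  simpa using enorm_tsum_le_tsum_enorm

lemma hnorm_bracket_le (hW : ∀ n : Mono d, ¬ suppInBarrier j₀ N n → W n = 0)
    {ρ δ : ℝ} (hρ : 1 ≤ ρ) (hδ : 0 < δ) (F : FormalHam d) :
    hnorm j₀ N ρ (bracket F W) ≤
      ENNReal.ofReal δ⁻¹ * (hnorm j₀ N (ρ + δ) F * hnorm j₀ N (ρ + δ) W) := by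
  -- the weight of the monomial `l` in the norm of the bracket
  set ω : Mono d → ℝ≥0∞ := fun l =>
    if inBarrier j₀ N l then (deg l : ℝ≥0∞) * ENNReal.ofReal (ρ ^ wexp l) else 0 with hω
  have step : hnorm j₀ N ρ (bracket F W) ≤ ∑' l, ∑' p, ‖bracketTerm F W l p‖ₑ * ω l := by
    unfold hnorm
    refine ENNReal.tsum_le_tsum fun l => ?_
    rw [ENNReal.tsum_mul_right]
    refine le_trans (le_of_eq ?_) (mul_le_mul_left (enorm_bracket_le F W l) _)
    simp only [hω]
    split_ifs
    · rw [mul_assoc]; rfl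
    · simp
  refine step.trans ?_
  rw [ENNReal.tsum_comm]
  refine le_trans ?_ (mul_le_mul_right (tsum_part_le j₀ N (ρ + δ) F W) _)
  rw [← ENNReal.tsum_mul_left]
  refine ENNReal.tsum_le_tsum ?_
  rintro ⟨k, n, m⟩
  have bound : ∀ l, ‖bracketTerm F W l (k, n, m)‖ₑ * ω l ≤ ENNReal.ofReal δ⁻¹ *
      (part j₀ N (ρ + δ) F n * part j₀ N (ρ + δ) W m * (coef k n m : ℝ≥0∞)) := by
    intro l
    by_cases h0 : bracketTerm F W l (k, n, m) = 0
    · simp [h0]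
    by_cases hl : inBarrier j₀ N l
    swap
    · simp [hω, hl]
    obtain ⟨hc, hkn, hkm, hn, hm⟩ := bracketTerm_ne_zero hW h0
    have hwt := ENNReal.ofReal_le_ofReal (hc.weight_le hkn hkm hl.one_le_deg hρ hδ)
    rw [ENNReal.ofReal_mul (by positivity), ENNReal.ofReal_natCast,
      ENNReal.ofReal_mul (by positivity), ENNReal.ofReal_mul (by positivity)] at hwt
    simp only [part, hn, hm, hω, hl, if_true]
    refine (mul_le_mul' (enorm_bracketTerm_le F W k n m l) hwt).trans (le_of_eq ?_)
    ring
  -- at most one monomial `l` contributes for a given triple `(k, n, m)`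
  by_cases hex : ∃ l, Contracts k n m l
  · obtain ⟨l₀, hl₀⟩ := hex
    rw [tsum_eq_single l₀]
    · exact bound l₀
    · intro l hl
      rw [bracketTerm_eq, if_neg fun h => hl (h.unique hl₀)]
      simp
  · have : ∀ l, ‖bracketTerm F W l (k, n, m)‖ₑ * ω l = 0 := fun l => by
      rw [bracketTerm_eq, if_neg fun h => hex ⟨l, h⟩]
      simp
    simp [this]

/-! ### Iterated brackets -/

/-- The loss `σ` of radius is split evenly over `i` brackets. -/
lemma hnorm_adIter_le_aux (hW : ∀ n : Mono d, ¬ suppInBarrier j₀ N n → W n = 0)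
    (U : FormalHam d) {r σ : ℝ} (hσ : 0 < σ) (hr : 1 ≤ r - σ) {i : ℕ} (hi : 0 < i) :
    ∀ k ≤ i, hnorm j₀ N (r - k * (σ / i)) (adIter W U k) ≤
      (ENNReal.ofReal (i / σ) * hnorm j₀ N r W) ^ k * hnorm j₀ N r U := by
  have hi' : (0 : ℝ) < i := by exact_mod_cast hi
  intro k
  induction k with
  | zero => intro _; simp [adIter]
  | succ k ih =>
    intro hk
    have hk' : ((k + 1 : ℕ) : ℝ) ≤ i := by exact_mod_cast hk
    have hρ : 1 ≤ r - ((k + 1 : ℕ) : ℝ) * (σ / i) := by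
      have : ((k + 1 : ℕ) : ℝ) * (σ / i) ≤ i * (σ / i) := by gcongr
      rw [mul_div_cancel₀ _ hi'.ne'] at this
      linarith
    have hstep := hnorm_bracket_le hW hρ (δ := σ / i) (by positivity) (adIter W U k)
    have e : r - ((k + 1 : ℕ) : ℝ) * (σ / i) + σ / i = r - k * (σ / i) := by push_cast; ring
    rw [e, inv_div] at hstep
    have hpos : (0 : ℝ) ≤ k * (σ / i) := by positivity
    have hpos' : (0 : ℝ) < σ / i := by positivity
    calc _ ≤ _ := hstep
      _ ≤ ENNReal.ofReal (i / σ) * (((ENNReal.ofReal (i / σ) * hnorm j₀ N r W) ^ k *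
            hnorm j₀ N r U) * hnorm j₀ N r W) := by
          gcongr
          · exact ih (by omega)
          · exact hnorm_mono j₀ N (by linarith) (by linarith) W
      _ = _ := by ring

/-- The bound with `k = i` brackets, simplified by `i ^ i ≤ i! e ^ i` and the smallness of `W`. -/
lemma hnorm_adIter_le (hW : ∀ n : Mono d, ¬ suppInBarrier j₀ N n → W n = 0)
    (U : FormalHam d) {r σ : ℝ} (hσ : 0 < σ) (hr : 1 ≤ r - σ)
    (hsmall : ENNReal.ofReal (Real.exp 1 / σ) * hnorm j₀ N r W ≤ 1 / 2) (i : ℕ) :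
    hnorm j₀ N (r - σ) (adIter W U i) ≤
      (Nat.factorial i : ℝ≥0∞) * ((1 / 2) ^ i * hnorm j₀ N r U) := by
  rcases Nat.eq_zero_or_pos i with rfl | hi
  · simpa [adIter] using hnorm_mono j₀ N (by linarith) (by linarith) U
  have hi' : (0 : ℝ) < i := by exact_mod_cast hi
  have h := hnorm_adIter_le_aux hW U hσ hr hi i le_rfl
  rw [mul_div_cancel₀ _ hi'.ne'] at h
  refine h.trans ?_
  rw [← mul_assoc]
  gcongr
  have hfac : ENNReal.ofReal (i / σ) ^ i ≤
      (Nat.factorial i : ℝ≥0∞) * ENNReal.ofReal (Real.exp 1 / σ) ^ i := by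
    rw [← ENNReal.ofReal_pow (by positivity), ← ENNReal.ofReal_pow (by positivity),
      ← ENNReal.ofReal_natCast, ← ENNReal.ofReal_mul (by positivity)]
    refine ENNReal.ofReal_le_ofReal ?_
    have hexp := Real.pow_div_factorial_le_exp (i : ℝ) hi'.le i
    rw [div_le_iff₀ (by positivity), ← Real.exp_one_pow] at hexp
    rw [div_pow, div_pow, ← mul_div_assoc]
    gcongr
    linarith
  calc _ = ENNReal.ofReal (i / σ) ^ i * hnorm j₀ N r W ^ i := mul_pow _ _ _
    _ ≤ (Nat.factorial i : ℝ≥0∞) * ENNReal.ofReal (Real.exp 1 / σ) ^ i * hnorm j₀ N r W ^ i := by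
        gcongr
    _ = (Nat.factorial i : ℝ≥0∞) * (ENNReal.ofReal (Real.exp 1 / σ) * hnorm j₀ N r W) ^ i := by
        rw [mul_pow, mul_assoc]
    _ ≤ _ := by gcongr

end

lemma tsum_half_pow : ∑' i : ℕ, (1 / 2 : ℝ≥0∞) ^ i = 2 := by
  rw [ENNReal.tsum_geometric, one_div, ENNReal.one_sub_inv_two, inv_inv]

lemma enorm_inv_factorial (i : ℕ) :
    ‖((Nat.factorial i : ℂ))⁻¹‖ₑ = ((Nat.factorial i : ℝ≥0∞))⁻¹ := by
  rw [enorm_inv (by exact_mod_cast Nat.factorial_ne_zero i), ← ofReal_norm, Complex.norm_natCast,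
    ENNReal.ofReal_natCast]

lemma inv_factorial_mul_le {i : ℕ} {x y : ℝ≥0∞} (h : x ≤ (Nat.factorial i : ℝ≥0∞) * y) :
    ((Nat.factorial i : ℝ≥0∞))⁻¹ * x ≤ y := by
  refine (mul_le_mul_right h _).trans (le_of_eq ?_)
  rw [← mul_assoc, ENNReal.inv_mul_cancel (by exact_mod_cast Nat.factorial_ne_zero i) (by simp),
    one_mul]

lemma hnorm_lieTransform_le {d : ℕ} (j₀ N r : ℝ) (W U : FormalHam d) :
    hnorm j₀ N r (lieTransform W U) ≤
      ∑' i : ℕ, ((Nat.factorial i : ℝ≥0∞))⁻¹ * hnorm j₀ N r (adIter W U i) := by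
  simp only [hnorm_eq, ← ENNReal.tsum_mul_left]
  rw [ENNReal.tsum_comm]
  refine ENNReal.tsum_le_tsum fun l => ?_
  unfold part
  split_ifs
  · have h : ‖lieTransform W U l‖ₑ ≤
        ∑' i : ℕ, ((Nat.factorial i : ℝ≥0∞))⁻¹ * ‖adIter W U i l‖ₑ := by
      refine enorm_tsum_le_tsum_enorm.trans (le_of_eq (tsum_congr fun i => ?_))
      rw [enorm_mul, enorm_inv_factorial]
    simp only [← mul_assoc]
    rw [ENNReal.tsum_mul_right, ENNReal.tsum_mul_right]
    gcongr
  · simp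

/-- Lie transform estimate. -/
theorem lie_transform_estimate {d : ℕ} (hd : 1 ≤ d) (j₀ N : ℕ) (r σ : ℝ)
    (hr : 2 < r) (hσ : 0 < σ) (hσr : σ < r / 2)
    (W U : FormalHam d)
    (hWsupp : ∀ n : Mono d, ¬ suppInBarrier (j₀ : ℝ) (N : ℝ) n → W n = 0)
    (hUfin : hnorm (j₀ : ℝ) (N : ℝ) r U < ⊤)
    (hWsmall : ENNReal.ofReal (Real.exp 1 / σ) * hnorm (j₀ : ℝ) (N : ℝ) r W ≤ 1 / 2) :
    LieAbsConv W U ∧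
      hnorm (j₀ : ℝ) (N : ℝ) (r - σ) (lieTransform W U) ≤ 2 * hnorm (j₀ : ℝ) (N : ℝ) r U := by
  have hρ : 1 ≤ r - σ := by linarith
  have had := hnorm_adIter_le hWsupp U hσ hρ hWsmall
  have hWfin : hnorm (j₀ : ℝ) (N : ℝ) r W ≠ ⊤ := by
    intro h
    rw [h, ENNReal.mul_top (by simpa using div_pos (Real.exp_pos 1) hσ)] at hWsmall
    simp at hWsmall
  have hWfin' : hnorm (j₀ : ℝ) (N : ℝ) (r - σ) W ≠ ⊤ :=
    ne_top_of_le_ne_top hWfin (hnorm_mono _ _ (by linarith) (by linarith) W)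
  have hcoef : ∀ i l, ∑' p, ‖bracketTerm (adIter W U i) W l p‖ₑ ≤
      (Nat.factorial i : ℝ≥0∞) * ((1 / 2) ^ i * hnorm (j₀ : ℝ) (N : ℝ) r U) *
        hnorm (j₀ : ℝ) (N : ℝ) (r - σ) W := fun i l =>
    (tsum_enorm_bracketTerm_le hWsupp hρ _ l).trans (mul_le_mul_left (had i) _)
  refine ⟨⟨fun i l => ?_, fun l => ?_⟩, ?_⟩
  · refine tsum_enorm_ne_top_iff_summable_norm.1 (ne_top_of_le_ne_top ?_ (hcoef i l))
    refine ENNReal.mul_ne_top (ENNReal.mul_ne_top (by simp) (ENNReal.mul_ne_top ?_ hUfin.ne)) hWfin'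
    exact ENNReal.pow_ne_top (by simp)
  · -- the coefficient at `i = 0` is that of `U`, which no norm controls away from the
    -- barrier; a single term does not affect summability
    rw [← summable_nat_add_iff 1]
    have hs : Summable fun i : ℕ =>
        ‖((Nat.factorial (i + 1) : ℂ))⁻¹ * adIter W U (i + 1) l‖ := by
      refine tsum_enorm_ne_top_iff_summable_norm.1 (ne_top_of_le_ne_top
        (b := ∑' i : ℕ, (1 / 2 : ℝ≥0∞) ^ i *
          (hnorm (j₀ : ℝ) (N : ℝ) r U * hnorm (j₀ : ℝ) (N : ℝ) (r - σ) W)) ?_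
        (ENNReal.tsum_le_tsum fun i => ?_))
      · rw [ENNReal.tsum_mul_right, tsum_half_pow]
        exact ENNReal.mul_ne_top (by simp) (ENNReal.mul_ne_top hUfin.ne hWfin')
      · rw [enorm_mul, enorm_inv_factorial]
        refine inv_factorial_mul_le ((enorm_bracket_le _ W l).trans ((hcoef i l).trans ?_))
        rw [mul_assoc, mul_assoc]
        gcongr
        omega
    refine hs.congr fun i => ?_
    rw [norm_mul, norm_inv, Complex.norm_natCast]
  · calc _ ≤ _ := hnorm_lieTransform_le _ _ _ W U
      _ ≤ ∑' i : ℕ, (1 / 2 : ℝ≥0∞) ^ i * hnorm (j₀ : ℝ) (N : ℝ) r U :=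
          ENNReal.tsum_le_tsum fun i => inv_factorial_mul_le (had i)
      _ = _ := by rw [ENNReal.tsum_mul_right, tsum_half_pow]

end QPNLS
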